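/- Let n ≥ 1, let A ∈ M_n(ℝ), and let N > 0 and Ξ > 0 be real numbers. Suppose that for every ω ∈ ℝ, σ_min(A − iωI) > Ξ√N, where A is regarded as a complex n×n matrix. Then there exists a real number ε > 0 such that the 2n×2n matrix fromBlocks A (N·I) (−(Ξ² + ε)·I) (−Aᵀ) is hyperbolic, i.e. regarded as a complex matrix it has no purely imaginary eigenvalue iω with ω ∈ ℝ. -/

import Mathlib

open Matrix

/-- The smallest singular value of a complex matrix: the infimum of `‖M v‖` over
unit vectors `v ∈ ℂ^n`. -/
noncomputable def sigmaMin {n : ℕ} (M : Matrix (Fin n) (Fin n) ℂ) : ℝ :=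
  sInf {r : ℝ | ∃ v : EuclideanSpace ℂ (Fin n), ‖v‖ = 1 ∧ r = ‖Matrix.toEuclideanLin M v‖}

/-!
If `(x, y)` is an eigenvector of the Hamiltonian matrix for `iω`, then `M = A - iω I` satisfies
`M x = -N y` and `Mᴴ y = -(Ξ² + ε) x`, so `N (Ξ² + ε)` is an eigenvalue of `Mᴴ M` and hence is at
least `σ_min(M)²`. The function `ω ↦ σ_min(A - iω I)` is Lipschitz and grows like `|ω|`, so it
attains its minimum, which therefore exceeds `Ξ √N` strictly; any `ε` with `N (Ξ² + ε)` below the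
square of that minimum excludes the eigenvalue.
-/

section Spectrum

variable {K m : Type*} [Field K] [Fintype m] [DecidableEq m]

theorem mem_spectrum_iff_exists_mulVec_eq_smul {M : Matrix m m K} {z : K} :
    z ∈ spectrum K M ↔ ∃ v, v ≠ 0 ∧ M *ᵥ v = z • v := by
  rw [spectrum.mem_iff, Matrix.isUnit_iff_isUnit_det, isUnit_iff_ne_zero, not_not,
    ← Matrix.exists_mulVec_eq_zero_iff]
  simp only [Algebra.algebraMap_eq_smul_one, sub_mulVec, smul_mulVec, one_mulVec, sub_eq_zero,
    eq_comm]

theorem mul_mem_spectrum_of_mem_spectrum_fromBlocks {A D : Matrix m m K} {b c z : K} (hb : b ≠ 0)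
    (hz : z ∈ spectrum K (fromBlocks A (b • (1 : Matrix m m K)) (c • (1 : Matrix m m K)) D)) :
    b * c ∈ spectrum K ((D - z • (1 : Matrix m m K)) * (A - z • (1 : Matrix m m K))) := by
  obtain ⟨v, hv, hHv⟩ := mem_spectrum_iff_exists_mulVec_eq_smul.1 hz
  obtain ⟨x, y, rfl⟩ : ∃ x y, v = Sum.elim x y := ⟨_, _, (Sum.elim_comp_inl_inr v).symm⟩
  have hblocks : A *ᵥ x + b • y = z • x ∧ c • x + D *ᵥ y = z • y := by
    simpa [fromBlocks_mulVec, smul_mulVec, funext_iff] using hHv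
  have hx : (A - z • (1 : Matrix m m K)) *ᵥ x = -b • y := by
    rw [sub_mulVec, smul_mulVec, one_mulVec, ← hblocks.1, neg_smul, sub_add_cancel_left]
  have hy : (D - z • (1 : Matrix m m K)) *ᵥ y = -c • x := by
    rw [sub_mulVec, smul_mulVec, one_mulVec, ← hblocks.2, neg_smul, sub_add_cancel_right]
  refine mem_spectrum_iff_exists_mulVec_eq_smul.2 ⟨x, ?_, ?_⟩
  · rintro rfl
    have hy0 : y = 0 := by simpa [hb] using hx.symm
    exact hv (by simp [hy0])
  · rw [← mulVec_mulVec, hx, mulVec_smul, hy, smul_smul, neg_mul_neg]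

end Spectrum

section SigmaMin

open scoped Matrix.Norms.L2Operator

variable {n : ℕ}

theorem sigmaMin_nonneg (M : Matrix (Fin n) (Fin n) ℂ) : 0 ≤ sigmaMin M := by
  refine Real.sInf_nonneg ?_
  rintro _ ⟨v, -, rfl⟩
  exact norm_nonneg _

theorem sigmaMin_mul_norm_le (M : Matrix (Fin n) (Fin n) ℂ) (v : EuclideanSpace ℂ (Fin n)) :
    sigmaMin M * ‖v‖ ≤ ‖toEuclideanLin M v‖ := by
  rcases eq_or_ne v 0 with rfl | hv
  · simp
  rw [← le_div_iff₀ (norm_pos_iff.2 hv)]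
  refine csInf_le ⟨0, ?_⟩ ⟨(‖v‖⁻¹ : ℂ) • v, norm_smul_inv_norm hv, ?_⟩
  · rintro _ ⟨w, -, rfl⟩
    exact norm_nonneg _
  · simp [norm_smul, div_eq_inv_mul]

theorem le_sigmaMin [NeZero n] {M : Matrix (Fin n) (Fin n) ℂ} {r : ℝ}
    (h : ∀ v : EuclideanSpace ℂ (Fin n), ‖v‖ = 1 → r ≤ ‖toEuclideanLin M v‖) :
    r ≤ sigmaMin M := by
  refine le_csInf ⟨_, EuclideanSpace.single 0 1, by simp, rfl⟩ ?_
  rintro _ ⟨v, hv, rfl⟩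
  exact h v hv

theorem sigmaMin_le_add_norm_sub [NeZero n] (M M' : Matrix (Fin n) (Fin n) ℂ) :
    sigmaMin M ≤ sigmaMin M' + ‖M - M'‖ := by
  rw [← sub_le_iff_le_add]
  refine le_sigmaMin fun v hv ↦ ?_
  have hM : sigmaMin M ≤ ‖toEuclideanLin M v‖ := by simpa [hv] using sigmaMin_mul_norm_le M v
  have hsub : ‖toEuclideanLin M v - toEuclideanLin M' v‖ ≤ ‖M - M'‖ := by
    rw [← LinearMap.sub_apply, ← map_sub]
    exact (toEuclideanCLM (𝕜 := ℂ) (M - M')).unit_le_opNorm v hv.le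
  linarith [norm_sub_norm_le (toEuclideanLin M v) (toEuclideanLin M' v)]

theorem lipschitzWith_sigmaMin [NeZero n] :
    LipschitzWith 1 (sigmaMin : Matrix (Fin n) (Fin n) ℂ → ℝ) :=
  LipschitzWith.of_le_add fun M M' ↦ by
    simpa only [dist_eq_norm] using sigmaMin_le_add_norm_sub M M'

theorem norm_le_sigmaMin_smul_one [NeZero n] (z : ℂ) :
    ‖z‖ ≤ sigmaMin (z • (1 : Matrix (Fin n) (Fin n) ℂ)) :=
  le_sigmaMin fun v hv ↦ by simp [hv, norm_smul]

theorem norm_sub_norm_le_sigmaMin_sub_smul_one [NeZero n] (A : Matrix (Fin n) (Fin n) ℂ) (z : ℂ) :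
    ‖z‖ - ‖A‖ ≤ sigmaMin (A - z • (1 : Matrix (Fin n) (Fin n) ℂ)) := by
  have hneg : ‖z‖ ≤ sigmaMin (-z • (1 : Matrix (Fin n) (Fin n) ℂ)) := by
    simpa using norm_le_sigmaMin_smul_one (n := n) (-z)
  have hadd := sigmaMin_le_add_norm_sub (-z • (1 : Matrix (Fin n) (Fin n) ℂ))
    (A - z • (1 : Matrix (Fin n) (Fin n) ℂ))
  rw [show -z • (1 : Matrix (Fin n) (Fin n) ℂ) - (A - z • 1) = -A by rw [neg_smul]; abel,
    norm_neg] at hadd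
  linarith

theorem exists_forall_sigmaMin_sub_smul_one_le [NeZero n] (A : Matrix (Fin n) (Fin n) ℂ) :
    ∃ ω₀ : ℝ, ∀ ω : ℝ,
      sigmaMin (A - ((ω₀ : ℂ) * Complex.I) • (1 : Matrix (Fin n) (Fin n) ℂ)) ≤
        sigmaMin (A - ((ω : ℂ) * Complex.I) • (1 : Matrix (Fin n) (Fin n) ℂ)) := by
  refine Continuous.exists_forall_le (lipschitzWith_sigmaMin.continuous.comp (by fun_prop)) ?_
  have hcoercive : Filter.Tendsto (fun ω : ℝ ↦ ‖ω‖ - ‖A‖) (Filter.cocompact ℝ) Filter.atTop :=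
    Filter.tendsto_atTop_add_const_right _ _ tendsto_norm_cocompact_atTop
  refine Filter.tendsto_atTop_mono (fun ω ↦ ?_) hcoercive
  simpa using norm_sub_norm_le_sigmaMin_sub_smul_one A (ω * Complex.I)

theorem sq_sigmaMin_le_of_mem_spectrum {M : Matrix (Fin n) (Fin n) ℂ} {μ : ℝ}
    (hμ : (μ : ℂ) ∈ spectrum ℂ (Mᴴ * M)) : sigmaMin M ^ 2 ≤ μ := by
  obtain ⟨x, hx, hMx⟩ := mem_spectrum_iff_exists_mulVec_eq_smul.1 hμ
  set v : EuclideanSpace ℂ (Fin n) := WithLp.toLp 2 x with hv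
  have hv0 : 0 < ‖v‖ := by simpa [hv] using hx
  have hadj : LinearMap.adjoint (toEuclideanLin M) (toEuclideanLin M v) = (μ : ℂ) • v := by
    rw [← toEuclideanLin_conjTranspose_eq_adjoint, hv, toLpLin_toLp, toLpLin_toLp]
    simp [hMx]
  have hnorm : ‖toEuclideanLin M v‖ ^ 2 = μ * ‖v‖ ^ 2 := by
    have hinner := LinearMap.adjoint_inner_right (toEuclideanLin M) v (toEuclideanLin M v)
    rw [hadj, inner_smul_right, inner_self_eq_norm_sq_to_K, inner_self_eq_norm_sq_to_K] at hinner
    exact Complex.ofReal_injective (by push_cast; exact hinner.symm)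
  refine le_of_mul_le_mul_right ?_ (pow_pos hv0 2)
  rw [← mul_pow, ← hnorm]
  exact pow_le_pow_left₀ (mul_nonneg (sigmaMin_nonneg M) hv0.le) (sigmaMin_mul_norm_le M v) 2

end SigmaMin

section Hamiltonian

variable {n : ℕ}

theorem notMem_spectrum_fromBlocks_of_lt_sq_sigmaMin {A : Matrix (Fin n) (Fin n) ℂ} {b c : ℝ}
    {z : ℂ} (hz : star z = -z) (hb : b ≠ 0)
    (h : b * c < sigmaMin (A - z • (1 : Matrix (Fin n) (Fin n) ℂ)) ^ 2) :
    z ∉ spectrum ℂ (fromBlocks A ((b : ℂ) • (1 : Matrix (Fin n) (Fin n) ℂ))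
      (-(c : ℂ) • (1 : Matrix (Fin n) (Fin n) ℂ)) (-Aᴴ)) := by
  intro hmem
  set M := A - z • (1 : Matrix (Fin n) (Fin n) ℂ) with hM
  have hMstar : -Aᴴ - z • (1 : Matrix (Fin n) (Fin n) ℂ) = -Mᴴ := by
    simp [hM, hz, sub_eq_add_neg, add_comm]
  have hbc := mul_mem_spectrum_of_mem_spectrum_fromBlocks (Complex.ofReal_ne_zero.2 hb) hmem
  rw [hMstar, neg_mul, ← spectrum.neg_eq, Set.mem_neg, mul_neg, neg_neg] at hbc
  exact h.not_ge (sq_sigmaMin_le_of_mem_spectrum (by exact_mod_cast hbc))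

theorem map_ofReal_fromBlocks_smul_one (A : Matrix (Fin n) (Fin n) ℝ) (b c : ℝ) :
    (fromBlocks A (b • (1 : Matrix (Fin n) (Fin n) ℝ)) ((-c) • (1 : Matrix (Fin n) (Fin n) ℝ))
        (-Aᵀ)).map Complex.ofReal =
      fromBlocks (A.map Complex.ofReal) ((b : ℂ) • (1 : Matrix (Fin n) (Fin n) ℂ))
        (-(c : ℂ) • (1 : Matrix (Fin n) (Fin n) ℂ)) (-(A.map Complex.ofReal)ᴴ) := by
  rw [fromBlocks_map, neg_smul, neg_smul]
  congr 1 <;> ext i j <;> simp [one_apply, apply_ite Complex.ofReal]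

end Hamiltonian

theorem stmt_7_general {n : ℕ} [NeZero n] (A : Matrix (Fin n) (Fin n) ℂ) {N Ξ : ℝ} (hN : 0 < N)
    (hΞ : 0 ≤ Ξ)
    (hdist : ∀ ω : ℝ, Ξ * Real.sqrt N <
      sigmaMin (A - ((ω : ℂ) * Complex.I) • (1 : Matrix (Fin n) (Fin n) ℂ))) :
    ∃ ε : ℝ, 0 < ε ∧
      ∀ ω : ℝ, Complex.I * (ω : ℂ) ∉
        spectrum ℂ (fromBlocks A ((N : ℂ) • (1 : Matrix (Fin n) (Fin n) ℂ))
          (-((Ξ ^ 2 + ε : ℝ) : ℂ) • (1 : Matrix (Fin n) (Fin n) ℂ)) (-Aᴴ)) := by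
  obtain ⟨ω₀, hmin⟩ := exists_forall_sigmaMin_sub_smul_one_le A
  set d := sigmaMin (A - ((ω₀ : ℂ) * Complex.I) • (1 : Matrix (Fin n) (Fin n) ℂ))
  have hgap : Ξ ^ 2 < d ^ 2 / N := by
    rw [lt_div_iff₀ hN, ← Real.sq_sqrt hN.le, ← mul_pow]
    exact pow_lt_pow_left₀ (hdist ω₀) (by positivity) two_ne_zero
  obtain ⟨c, hΞc, hcd⟩ := exists_between hgap
  refine ⟨c - Ξ ^ 2, sub_pos.2 hΞc, fun ω ↦ ?_⟩
  rw [add_sub_cancel, mul_comm Complex.I]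
  refine notMem_spectrum_fromBlocks_of_lt_sq_sigmaMin (by simp) hN.ne' ?_
  calc N * c < d ^ 2 := (lt_div_iff₀' hN).1 hcd
    _ ≤ _ := pow_le_pow_left₀ (sigmaMin_nonneg _) (hmin ω) 2

/-- Part I of the proof of Lemma 2: if `σ_min(A − iωI) > Ξ√N` for all `ω ∈ ℝ`, then
there is a slack `ε > 0` for which the perturbed Hamiltonian matrix
`fromBlocks A (N·I) (−(Ξ²+ε)·I) (−Aᵀ)` remains hyperbolic. -/
theorem stmt_7 (n : ℕ) (hn : 1 ≤ n) (A : Matrix (Fin n) (Fin n) ℝ)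
    (N Ξ : ℝ) (hN : 0 < N) (hΞ : 0 < Ξ)
    (hdist : ∀ ω : ℝ, Ξ * Real.sqrt N <
      sigmaMin (A.map Complex.ofReal -
        ((ω : ℂ) * Complex.I) • (1 : Matrix (Fin n) (Fin n) ℂ))) :
    ∃ ε : ℝ, 0 < ε ∧
      ∀ ω : ℝ, Complex.I * (ω : ℂ) ∉
        spectrum ℂ ((Matrix.fromBlocks A (N • (1 : Matrix (Fin n) (Fin n) ℝ))
          ((-(Ξ ^ 2 + ε)) • (1 : Matrix (Fin n) (Fin n) ℝ)) (-Aᵀ)).map Complex.ofReal) := by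
  have : NeZero n := ⟨Nat.one_le_iff_ne_zero.1 hn⟩
  simpa only [map_ofReal_fromBlocks_smul_one] using stmt_7_general _ hN hΞ.le hdist
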